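/- Let G be a graph whose vertex set is partitioned into three cliques Q_1, Q_2, Q_3 such that: (a) each vertex in Q_i has at most one neighbor in Q_j for all i ≠ j; (b) if a vertex in Q_i is adjacent to vertices b ∈ Q_j and c ∈ Q_k (with i, j, k distinct), then b and c are adjacent; (c) there are finite lists L_1, L_2, L_3 of colors with every vertex of Q_i having list L_i, |L_i| ≥ |Q_i|, each L_i containing a color d_i such that d_1, d_2, d_3 are pairwise distinct, and no color belonging to all three lists L_1, L_2, L_3. Then G admits a proper coloring assigning to each vertex of Q_i a color from L_i. -/

import Mathlib

open SimpleGraph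

/-- The claw `K_{1,3}`: vertex 0 adjacent to 1, 2, 3. -/
def claw : SimpleGraph (Fin 4) := SimpleGraph.fromRel (fun a _ => a = 0)

/-- `4K_1`: the edgeless graph on four vertices. -/
def fourK1 : SimpleGraph (Fin 4) := ⊥

/-- `K_5 - e`: the complete graph on five vertices minus the edge {0,1}. -/
def K5e : SimpleGraph (Fin 5) :=
  SimpleGraph.fromRel (fun a b => ¬(a = 0 ∧ b = 1) ∧ ¬(a = 1 ∧ b = 0))

/-- The 5-wheel: the cycle 0-1-2-3-4-0 together with hub 5 adjacent to all. -/
def wheel5 : SimpleGraph (Fin 6) :=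
  SimpleGraph.fromRel (fun a b =>
    (a ≠ 5 ∧ b ≠ 5 ∧ b.val = (a.val + 1) % 5) ∨ a = 5 ∨ b = 5)

/-- The `C_5`-twin: the cycle 0-1-2-3-4-0 together with vertex 5, a true twin
of vertex 0 (adjacent to 0, 1 and 4). -/
def C5twin : SimpleGraph (Fin 6) :=
  SimpleGraph.fromRel (fun a b =>
    (a ≠ 5 ∧ b ≠ 5 ∧ b.val = (a.val + 1) % 5) ∨ (a = 5 ∧ (b = 0 ∨ b = 1 ∨ b = 4)))

/-- The `P_5`-twin: the path 0-1-2-3-4 together with vertex 5, a true twin of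
the middle vertex 2 (adjacent to 1, 2 and 3). -/
def P5twin : SimpleGraph (Fin 6) :=
  SimpleGraph.fromRel (fun a b =>
    (a ≠ 5 ∧ b ≠ 5 ∧ b.val = a.val + 1) ∨ (a = 5 ∧ (b = 1 ∨ b = 2 ∨ b = 3)))

/-- The chordless cycle on seven vertices. -/
def C7 : SimpleGraph (Fin 7) :=
  SimpleGraph.fromRel (fun a b => b.val = (a.val + 1) % 7)

/-- `G` is `H`-free: `G` contains no induced subgraph isomorphic to `H`,
i.e. there is no graph embedding of `H` into `G`. -/
def Free {V W : Type*} (G : SimpleGraph V) (H : SimpleGraph W) : Prop :=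
  IsEmpty (H ↪g G)

/-- `X_i`: vertices outside the five-cycle `v 0, …, v 4` whose neighbours on the
cycle are exactly `v i` and `v (i+1)`. -/
def cycX {V : Type*} (G : SimpleGraph V) (v : ZMod 5 → V) (i : ZMod 5) : Set V :=
  {w | w ∉ Set.range v ∧ ∀ j : ZMod 5, G.Adj w (v j) ↔ (j = i ∨ j = i + 1)}

/-- `Y_i`: vertices outside the five-cycle whose neighbours on the cycle are
exactly `v i, v (i+1), v (i+2), v (i+3)`. -/
def cycY {V : Type*} (G : SimpleGraph V) (v : ZMod 5 → V) (i : ZMod 5) : Set V :=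
  {w | w ∉ Set.range v ∧
    ∀ j : ZMod 5, G.Adj w (v j) ↔ (j = i ∨ j = i + 1 ∨ j = i + 2 ∨ j = i + 3)}

/-- `R`: vertices outside the five-cycle with no neighbour on the cycle. -/
def cycR {V : Type*} (G : SimpleGraph V) (v : ZMod 5 → V) : Set V :=
  {w | w ∉ Set.range v ∧ ∀ j : ZMod 5, ¬ G.Adj w (v j)}

/-!
Colour the parts one at a time. A colour of `L k` is blocked for at most one vertex of `Q k`, since
it occurs in at most one other list and the edges between two parts form a matching. By Hall's
theorem a colouring of other parts therefore extends to `Q k` unless every colour of `L k` is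
blocked for a single vertex `z`, and `z` has at most one neighbour in each part.

For three parts, colour `Q k` last, where `L k` is a largest list. A failure forces
`#(L k) ≤ 2`. If `#(L k) = 2`, then `z` lies in a triangle meeting all parts, and the lists are
pairs `{c i, e i}`, possibly with `c i = e i`: colour the triangle by `c` and everything else by
`e`. If `#(L k) ≤ 1`, then every part has at most one vertex and the colours `d i` do.
-/

open Finset Function

section Hall

variable {X α : Type*} [Fintype X]

theorem card_le_card_biUnion_filter_not [DecidableEq α] {L : Finset α} {R : X → α → Prop}
    [∀ x, DecidablePred (R x)] (hcard : Fintype.card X ≤ #L)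
    (huniq : ∀ c ∈ L, ∀ x y, R x c → R y c → x = y) (hfree : ∀ x, ∃ c ∈ L, ¬ R x c)
    (T : Finset X) : #T ≤ #(T.biUnion fun x ↦ {c ∈ L | ¬ R x c}) := by
  rcases T.eq_empty_or_nonempty with rfl | ⟨x, hx⟩
  · simp
  by_cases hT : #T ≤ 1
  · obtain ⟨c, hcL, hcx⟩ := hfree x
    exact hT.trans (card_pos.2 ⟨c, mem_biUnion.2 ⟨x, hx, mem_filter.2 ⟨hcL, hcx⟩⟩⟩)
  · obtain ⟨a, ha, b, hb, hab⟩ := one_lt_card.1 (not_le.1 hT)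
    have hL : L ⊆ T.biUnion fun x ↦ {c ∈ L | ¬ R x c} := fun c hc ↦ by
      by_cases hca : R a c
      · exact mem_biUnion.2 ⟨b, hb, mem_filter.2 ⟨hc, fun hcb ↦ hab (huniq c hc a b hca hcb)⟩⟩
      · exact mem_biUnion.2 ⟨a, ha, mem_filter.2 ⟨hc, hca⟩⟩
    exact (card_le_univ T).trans (hcard.trans (card_le_card hL))

theorem exists_injective_forall_mem_not {L : Finset α} {R : X → α → Prop}
    (hcard : Fintype.card X ≤ #L) (huniq : ∀ c ∈ L, ∀ x y, R x c → R y c → x = y)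
    (hfree : ∀ x, ∃ c ∈ L, ¬ R x c) :
    ∃ g : X → α, Injective g ∧ ∀ x, g x ∈ L ∧ ¬ R x (g x) := by
  classical
  obtain ⟨g, hg, hgmem⟩ := (all_card_le_biUnion_card_iff_exists_injective
    fun x ↦ {c ∈ L | ¬ R x c}).1 (card_le_card_biUnion_filter_not hcard huniq hfree)
  exact ⟨g, hg, fun x ↦ mem_filter.1 (hgmem x)⟩

end Hall

section Parts

variable {V α ι : Type*} {G : SimpleGraph V} {Q : ι → Finset V} {L : ι → Finset α}

/-- The edges of `G` between any two distinct parts of `Q` form a matching. -/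
def CrossMatching (G : SimpleGraph V) (Q : ι → Finset V) : Prop :=
  ∀ i j, i ≠ j → ∀ x ∈ Q i, ∀ b ∈ Q j, ∀ c ∈ Q j, G.Adj x b → G.Adj x c → b = c

/-- Neighbours of a vertex that lie in two further distinct parts of `Q` are adjacent. -/
def CrossTransitive (G : SimpleGraph V) (Q : ι → Finset V) : Prop :=
  ∀ i j k, i ≠ j → j ≠ k → i ≠ k →
    ∀ a ∈ Q i, ∀ b ∈ Q j, ∀ c ∈ Q k, G.Adj a b → G.Adj a c → G.Adj b c

/-- No colour belongs to three of the lists `L`. -/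
def NoTripleOverlap (L : ι → Finset α) : Prop :=
  ∀ i j k, i ≠ j → j ≠ k → i ≠ k → ∀ c ∈ L i, c ∈ L j → c ∉ L k

/-- The parts `Q i` with `i ∈ I` are properly coloured from the lists `L i`, each part being treated
as a clique. Each part has its own colour function, so that the parts can be coloured independently;
the values of `φ i` for `i ∉ I` are irrelevant. -/
structure IsListColoringOn (G : SimpleGraph V) (Q : ι → Finset V) (L : ι → Finset α)
    (I : Finset ι) (φ : ∀ i, Q i → α) : Prop where
  mem : ∀ i ∈ I, ∀ w, φ i w ∈ L i
  injective : ∀ i ∈ I, Injective (φ i)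
  ne_of_adj : ∀ i ∈ I, ∀ j ∈ I, i ≠ j → ∀ (a : Q i) (b : Q j), G.Adj a b → φ i a ≠ φ j b

/-- The colour `c` is unavailable to `z`: a neighbour of `z` in a part indexed by `I` has it. -/
def IsBlocked (G : SimpleGraph V) (I : Finset ι) (φ : ∀ i, Q i → α) (z : V) (c : α) : Prop :=
  ∃ i ∈ I, ∃ w : Q i, G.Adj z w ∧ φ i w = c

open Classical in
/-- The indices in `I` of the parts in which `z` has a neighbour. -/
noncomputable def neighborParts (G : SimpleGraph V) (Q : ι → Finset V) (I : Finset ι) (z : V) :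
    Finset ι :=
  {i ∈ I | ∃ w ∈ Q i, G.Adj z w}

theorem mem_neighborParts {I : Finset ι} {z : V} {i : ι} :
    i ∈ neighborParts G Q I z ↔ i ∈ I ∧ ∃ w ∈ Q i, G.Adj z w := by
  classical exact mem_filter

theorem neighborParts_subset (G : SimpleGraph V) (Q : ι → Finset V) (I : Finset ι) (z : V) :
    neighborParts G Q I z ⊆ I :=
  fun _ hi ↦ (mem_neighborParts.1 hi).1

theorem exists_not_isBlocked (hQ : CrossMatching G Q) {I : Finset ι} (φ : ∀ i, Q i → α) {k : ι}
    (hk : k ∉ I) (z : Q k) {M : Finset α} (hM : #(neighborParts G Q I z) < #M) :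
    ∃ c ∈ M, ¬ IsBlocked G I φ z c := by
  by_contra! hblocked
  refine hM.not_ge (card_le_card_of_forall_subsingleton
    (fun c i ↦ ∃ w : Q i, G.Adj z w ∧ φ i w = c) (fun c hc ↦ ?_) fun i hi ↦ ?_)
  · obtain ⟨i, hi, w, hzw, hw⟩ := hblocked c hc
    exact ⟨i, mem_neighborParts.2 ⟨hi, w, w.2, hzw⟩, w, hzw, hw⟩
  · rintro _ ⟨-, w, hzw, rfl⟩ _ ⟨-, w', hzw', rfl⟩
    have hki : k ≠ i := fun h ↦ hk (h ▸ neighborParts_subset G Q I z hi)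
    rw [Subtype.ext (hQ k i hki z z.2 w w.2 w' w'.2 hzw hzw')]

namespace IsListColoringOn

theorem eq_of_isBlocked (hQ : CrossMatching G Q) (hL : NoTripleOverlap L) {I : Finset ι}
    {φ : ∀ i, Q i → α} (hφ : IsListColoringOn G Q L I φ) {k : ι} (hk : k ∉ I) {c : α}
    (hc : c ∈ L k) {x y : Q k} (hx : IsBlocked G I φ x c) (hy : IsBlocked G I φ y c) : x = y := by
  obtain ⟨i, hi, w, hxw, rfl⟩ := hx
  obtain ⟨j, hj, w', hyw', hw'⟩ := hy
  have hik : i ≠ k := ne_of_mem_of_not_mem hi hk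
  have hjk : j ≠ k := ne_of_mem_of_not_mem hj hk
  obtain rfl : i = j := by
    by_contra hij
    exact hL i j k hij hjk hik _ (hφ.mem i hi w) (hw' ▸ hφ.mem j hj w') hc
  obtain rfl : w' = w := hφ.injective i hi hw'
  exact Subtype.ext (hQ i k hik w' w'.2 x x.2 y y.2 hxw.symm hyw'.symm)

theorem update [DecidableEq ι] {I : Finset ι} {φ : ∀ i, Q i → α}
    (hφ : IsListColoringOn G Q L I φ) {k : ι} (hk : k ∉ I) {g : Q k → α} (hg : Injective g)
    (hgL : ∀ z, g z ∈ L k) (hfree : ∀ z : Q k, ¬ IsBlocked G I φ z (g z)) :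
    IsListColoringOn G Q L (insert k I) (Function.update φ k g) := by
  have hne : ∀ i ∈ I, i ≠ k := fun i hi ↦ ne_of_mem_of_not_mem hi hk
  refine ⟨(forall_mem_insert ..).2 ⟨?_, fun i hi ↦ ?_⟩,
    (forall_mem_insert ..).2 ⟨?_, fun i hi ↦ ?_⟩, fun i hi j hj hij a b hab heq ↦ ?_⟩
  · simpa only [update_self] using hgL
  · simpa only [update_of_ne (hne i hi)] using hφ.mem i hi
  · simpa only [update_self] using hg
  · simpa only [update_of_ne (hne i hi)] using hφ.injective i hi
  · rcases mem_insert.1 hi with rfl | hiI <;> rcases mem_insert.1 hj with rfl | hjI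
    · exact hij rfl
    · rw [update_self, update_of_ne (hne j hjI)] at heq
      exact hfree a ⟨j, hjI, b, hab, heq.symm⟩
    · rw [update_of_ne (hne i hiI), update_self] at heq
      exact hfree b ⟨i, hiI, a, hab.symm, heq⟩
    · rw [update_of_ne (hne i hiI), update_of_ne (hne j hjI)] at heq
      exact hφ.ne_of_adj i hiI j hjI hij a b hab heq

theorem exists_insert [DecidableEq ι] (hQ : CrossMatching G Q) (hL : NoTripleOverlap L)
    {I : Finset ι} {φ : ∀ i, Q i → α} (hφ : IsListColoringOn G Q L I φ) {k : ι} (hk : k ∉ I)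
    (hcard : #(Q k) ≤ #(L k)) (hnbr : ∀ z ∈ Q k, #(neighborParts G Q I z) < #(L k)) :
    ∃ ψ, IsListColoringOn G Q L (insert k I) ψ := by
  obtain ⟨g, hg, hgL⟩ := exists_injective_forall_mem_not (R := fun z : Q k ↦ IsBlocked G I φ z)
    ((Fintype.card_coe _).trans_le hcard) (fun c hc x y ↦ hφ.eq_of_isBlocked hQ hL hk hc)
    fun z ↦ exists_not_isBlocked hQ φ hk z (hnbr z z.2)
  exact ⟨_, hφ.update hk hg (fun z ↦ (hgL z).1) fun z ↦ (hgL z).2⟩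

theorem of_card_le_one {I : Finset ι} (hcard : ∀ i ∈ I, #(Q i) ≤ 1) {d : ι → α}
    (hd : ∀ i ∈ I, d i ∈ L i) (hdinj : Set.InjOn d I) :
    IsListColoringOn G Q L I fun i _ ↦ d i where
  mem i hi _ := hd i hi
  injective i hi a b _ := Subtype.ext (card_le_one.1 (hcard i hi) a a.2 b b.2)
  ne_of_adj _ hi _ hj hij _ _ _ := hdinj.ne hi hj hij

theorem exists_pair [DecidableEq ι] (hQ : CrossMatching G Q) (hL : NoTripleOverlap L)
    (hcard : ∀ i, #(Q i) ≤ #(L i)) {d : ι → α} (hd : ∀ i, d i ∈ L i) (hdinj : Injective d)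
    {i j : ι} (hij : i ≠ j) : ∃ φ, IsListColoringOn G Q L {i, j} φ := by
  wlog hle : #(L j) ≤ #(L i) generalizing i j
  · rw [pair_comm]
    exact this hij.symm (not_le.1 hle).le
  by_cases hone : #(L i) ≤ 1
  · refine ⟨_, of_card_le_one (fun t ht ↦ (hcard t).trans ?_) (fun t _ ↦ hd t) hdinj.injOn⟩
    rcases mem_insert.1 ht with rfl | ht
    · exact hone
    · exact mem_singleton.1 ht ▸ hle.trans hone
  have hnbr (I : Finset ι) (z : V) : #(neighborParts G Q I z) ≤ #I :=
    card_le_card (neighborParts_subset G Q I z)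
  have hempty : IsListColoringOn G Q L ∅ fun i _ ↦ d i :=
    of_card_le_one (by simp) (by simp) (by simp)
  obtain ⟨φ, hφ⟩ := hempty.exists_insert hQ hL (notMem_empty j) (hcard j)
    fun z _ ↦ (hnbr ∅ z).trans_lt (card_pos.2 ⟨d j, hd j⟩)
  exact hφ.exists_insert hQ hL (by simpa using hij) (hcard i)
    fun z _ ↦ (hnbr _ z).trans_lt (not_le.1 hone)

end IsListColoringOn

theorem CrossTransitive.exists_pairwise_adj (hQ : CrossTransitive G Q) {k : ι} {z : V}
    (hz : z ∈ Q k) (hnbr : ∀ i, i ≠ k → ∃ w ∈ Q i, G.Adj z w) :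
    ∃ x : ∀ i, Q i, Pairwise fun i j ↦ G.Adj (x i) (x j) := by
  have hchoice : ∀ i, ∃ w : Q i, (i = k → (w : V) = z) ∧ (i ≠ k → G.Adj z w) := fun i ↦ by
    by_cases hik : i = k
    · exact ⟨⟨z, hik ▸ hz⟩, fun _ ↦ rfl, fun h ↦ absurd hik h⟩
    · obtain ⟨w, hw, hzw⟩ := hnbr i hik
      exact ⟨⟨w, hw⟩, fun h ↦ absurd h hik, fun _ ↦ hzw⟩
  choose x hxk hx using hchoice
  refine ⟨x, fun i j hij ↦ ?_⟩
  beta_reduce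
  by_cases hik : i = k
  · rw [hxk i hik]
    exact hx j (hik ▸ hij.symm)
  by_cases hjk : j = k
  · rw [hxk j hjk]
    exact (hx i hik).symm
  · exact hQ k i j (Ne.symm hik) hij (Ne.symm hjk) z hz _ (x i).2 _ (x j).2 (hx i hik) (hx j hjk)

theorem injective_ite_eq_of_card_le {X : Type*} [Fintype X] [DecidableEq X] [DecidableEq α]
    {a b : α} (hcard : Fintype.card X ≤ #{a, b}) (x : X) :
    Injective fun w ↦ if w = x then a else b := by
  intro u v huv
  by_contra hne
  by_cases hab : a = b
  · exact hne (Fintype.card_le_one_iff.1 (hcard.trans (by simp [hab])) u v)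
  · have htwo : Fintype.card X ≤ 2 := hcard.trans card_le_two
    refine htwo.not_gt (Fintype.two_lt_card_iff.2 ⟨u, v, x, hne, ?_, ?_⟩) <;> grind

theorem IsListColoringOn.of_pairwise_adj [DecidableEq V] [DecidableEq α] (hQ : CrossMatching G Q)
    (hcard : ∀ i, #(Q i) ≤ #(L i)) {x : ∀ i, Q i} (hx : Pairwise fun i j ↦ G.Adj (x i) (x j))
    {c e : ι → α} (hL : ∀ i, L i = {c i, e i}) (hc : Injective c)
    (he : ∀ i j, i ≠ j → e i = e j → c i = e i ∨ c j = e j) (I : Finset ι) :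
    IsListColoringOn G Q L I fun i w ↦ if w = x i then c i else e i := by
  have hinj (i : ι) : Injective fun w : Q i ↦ if w = x i then c i else e i :=
    injective_ite_eq_of_card_le ((Fintype.card_coe _).trans_le (hL i ▸ hcard i)) (x i)
  have hsingle {i : ι} (hce : c i = e i) (w : Q i) : w = x i := hinj i (by simp [hce])
  refine ⟨fun i _ w ↦ ?_, fun i _ ↦ hinj i, fun i _ j _ hij a b hab heq ↦ ?_⟩
  · rw [hL i]
    split_ifs <;> simp
  have hiff : a = x i ↔ b = x j := by
    constructor
    · rintro rfl
      exact Subtype.ext (hQ i j hij _ (x i).2 b b.2 _ (x j).2 hab (hx hij))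
    · rintro rfl
      exact Subtype.ext (hQ j i hij.symm _ (x j).2 a a.2 _ (x i).2 hab.symm (hx hij.symm))
  by_cases hb : b = x j
  · simp only [hiff.2 hb, hb, if_true] at heq
    exact hij (hc heq)
  · have ha : a ≠ x i := mt hiff.1 hb
    simp only [ha, hb, if_false] at heq
    exact (he i j hij heq).elim (fun h ↦ ha (hsingle h a)) fun h ↦ hb (hsingle h b)

theorem exists_forall_part_eq (hcover : ∀ w, ∃ i, w ∈ Q i)
    (hdisj : ∀ i j, i ≠ j → Disjoint (Q i) (Q j)) (φ : ∀ i, Q i → α) :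
    ∃ f : V → α, ∀ i (w : Q i), f w = φ i w := by
  choose part hpart using hcover
  refine ⟨fun w ↦ φ (part w) ⟨w, hpart w⟩, fun i ⟨w, hw⟩ ↦ ?_⟩
  obtain rfl : part w = i := by
    by_contra hne
    exact disjoint_left.1 (hdisj _ _ hne) (hpart w) hw
  rfl

end Parts

theorem exists_eq_pair_of_mem_of_card_le_two {α : Type*} [DecidableEq α] {s : Finset α} {a : α}
    (ha : a ∈ s) (hs : #s ≤ 2) : ∃ b, s = {a, b} := by
  have herase : #(s.erase a) ≤ 1 := by
    rw [card_erase_of_mem ha]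
    omega
  rcases (s.erase a).eq_empty_or_nonempty with hempty | ⟨b, hb⟩
  · exact ⟨a, by rw [pair_eq_singleton, ← insert_empty_eq a, ← hempty, insert_erase ha]⟩
  · have hsingle : s.erase a = {b} :=
      eq_singleton_iff_unique_mem.2 ⟨hb, fun x hx ↦ card_le_one.1 herase x hx b hb⟩
    exact ⟨b, by rw [← hsingle, insert_erase ha]⟩

section ThreeParts

variable {V α : Type*} {G : SimpleGraph V} {Q : Fin 3 → Finset V} {L : Fin 3 → Finset α}

theorem eq_or_eq_or_eq_of_fin_three {i j k : Fin 3} (hij : i ≠ j) (hjk : j ≠ k) (hik : i ≠ k)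
    (t : Fin 3) : t = i ∨ t = j ∨ t = k := by
  omega

theorem exists_insert_pair_eq_univ (k : Fin 3) :
    ∃ i j, i ≠ j ∧ k ∉ ({i, j} : Finset (Fin 3)) ∧ insert k {i, j} = (univ : Finset (Fin 3)) := by
  decide +revert

theorem noTripleOverlap_of_not_exists (hL : ¬ ∃ c, ∀ i, c ∈ L i) : NoTripleOverlap L := by
  intro i j k hij hjk hik c hi hj hk
  refine hL ⟨c, fun t ↦ ?_⟩
  rcases eq_or_eq_or_eq_of_fin_three hij hjk hik t with rfl | rfl | rfl <;> assumption

theorem injective_of_fin_three {f : Fin 3 → α} {i j k : Fin 3} (hij : f i ≠ f j)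
    (hjk : f j ≠ f k) (hik : f i ≠ f k) : Injective f := by
  intro s t hst
  have hcases := eq_or_eq_or_eq_of_fin_three (ne_of_apply_ne f hij) (ne_of_apply_ne f hjk)
    (ne_of_apply_ne f hik)
  rcases hcases s with rfl | rfl | rfl <;> rcases hcases t with rfl | rfl | rfl <;> simp_all

theorem exists_eq_pair_injective [DecidableEq α] (hL : NoTripleOverlap L)
    (hcard : ∀ i, #(L i) ≤ 2) {d : Fin 3 → α} (hd : ∀ i, d i ∈ L i) (hdinj : Injective d) :
    ∃ c e : Fin 3 → α, (∀ i, L i = {c i, e i}) ∧ Injective c ∧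
      ∀ i j, i ≠ j → e i = e j → c i = e i ∨ c j = e j := by
  choose e he using fun i ↦ exists_eq_pair_of_mem_of_card_le_two (hd i) (hcard i)
  by_cases hgood : ∀ i j, i ≠ j → e i = e j → d i = e i ∨ d j = e j
  · exact ⟨d, e, he, hdinj, hgood⟩
  -- If `e i = e j` spoils the choice `c = d`, exchange `d` and `e` at `i` or at `j`: since `e i` is
  -- not in the third list `L k` and `e k` cannot equal both `d i` and `d j`, one of these exchanges
  -- makes both functions injective.
  push Not at hgood
  obtain ⟨i, j, hij, heij, hi, hj⟩ := hgood
  obtain ⟨k, hik, hjk⟩ : ∃ k, i ≠ k ∧ j ≠ k :=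
    (by decide : ∀ i j : Fin 3, ∃ k, i ≠ k ∧ j ≠ k) i j
  wlog hki : d i ≠ e k generalizing i j
  · exact this j i hij.symm heij.symm hj hi hjk hik
      fun h ↦ hij (hdinj ((not_not.1 hki).trans h.symm))
  have heik : e i ∉ L k :=
    hL i j k hij hjk hik (e i) (by simp [he i]) (by simp [he j, heij])
  have heik_d : e i ≠ d k := fun h ↦ heik (h ▸ hd k)
  have heik_e : e i ≠ e k := fun h ↦ heik (by simp [he k, h])
  have hc : Injective (update d i (e i)) := by
    refine injective_of_fin_three (i := i) (j := j) (k := k) ?_ ?_ ?_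
    · simpa [hij.symm, heij] using hj.symm
    · simpa [hij.symm, hik.symm] using hdinj.ne hjk
    · simpa [hik.symm] using heik_d
  have he' : Injective (update e i (d i)) := by
    refine injective_of_fin_three (i := i) (j := j) (k := k) ?_ ?_ ?_
    · simpa [hij.symm, ← heij] using hi
    · simpa [hij.symm, hik.symm, ← heij] using heik_e
    · simpa [hik.symm] using hki
  refine ⟨_, _, fun t ↦ ?_, hc, fun s t hst h ↦ absurd (he' h) hst⟩
  rcases eq_or_ne t i with rfl | hti
  · rw [update_self, update_self, pair_comm, he t]
  · rw [update_of_ne hti, update_of_ne hti, he t]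

theorem exists_isListColoringOn_univ (hmatch : CrossMatching G Q) (htrans : CrossTransitive G Q)
    (hL : NoTripleOverlap L) (hcard : ∀ i, #(Q i) ≤ #(L i)) {d : Fin 3 → α}
    (hd : ∀ i, d i ∈ L i) (hdinj : Injective d) :
    ∃ φ, IsListColoringOn G Q L univ φ := by
  classical
  obtain ⟨k, hkmax⟩ := Finite.exists_max fun i ↦ #(L i)
  obtain ⟨i, j, hij, hk, huniv⟩ := exists_insert_pair_eq_univ k
  obtain ⟨φ, hφ⟩ := IsListColoringOn.exists_pair hmatch hL hcard hd hdinj hij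
  by_cases hnbr : ∀ z ∈ Q k, #(neighborParts G Q {i, j} z) < #(L k)
  · exact huniv ▸ hφ.exists_insert hmatch hL hk (hcard k) hnbr
  push Not at hnbr
  obtain ⟨z, hz, hLz⟩ := hnbr
  have hsub := neighborParts_subset G Q {i, j} z
  have hpair : #{i, j} = 2 := card_pair hij
  by_cases hall : neighborParts G Q {i, j} z = {i, j}
  · have hLtwo (t : Fin 3) : #(L t) ≤ 2 := by
      rw [← hpair, ← hall]
      exact (hkmax t).trans hLz
    obtain ⟨x, hx⟩ := htrans.exists_pairwise_adj hz fun t htk ↦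
      (mem_neighborParts.1 (hall ▸ mem_of_mem_insert_of_ne (huniv ▸ mem_univ t) htk)).2
    obtain ⟨c, e, hce, hc, he⟩ := exists_eq_pair_injective hL hLtwo hd hdinj
    exact ⟨_, .of_pairwise_adj hmatch hcard hx hce hc he univ⟩
  · have hlt := card_lt_card (hsub.ssubset_of_ne hall)
    refine ⟨_, .of_card_le_one (fun t _ ↦ ?_) (fun t _ ↦ hd t) hdinj.injOn⟩
    linarith [hcard t, hkmax t]

end ThreeParts

theorem stmt_18_general
    {V : Type*} (G : SimpleGraph V) {α : Type*}
    (Q : Fin 3 → Finset V)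
    (hcover : ∀ w : V, ∃ i, w ∈ Q i)
    (hdisj : ∀ i j, i ≠ j → Disjoint (Q i) (Q j))
    (ha : CrossMatching G Q) (hb : CrossTransitive G Q)
    (L : Fin 3 → Finset α)
    (hsize : ∀ i, #(Q i) ≤ #(L i))
    (d : Fin 3 → α) (hd : ∀ i, d i ∈ L i) (hdinj : Injective d)
    (hnocommon : ¬ ∃ c : α, ∀ i, c ∈ L i) :
    ∃ f : V → α, (∀ i, ∀ w ∈ Q i, f w ∈ L i) ∧ (∀ i, Set.InjOn f (Q i)) ∧
      ∀ a b : V, G.Adj a b → f a ≠ f b := by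
  obtain ⟨φ, hφ⟩ := exists_isListColoringOn_univ ha hb (noTripleOverlap_of_not_exists hnocommon)
    hsize hd hdinj
  obtain ⟨f, hf⟩ := exists_forall_part_eq hcover hdisj φ
  have hinj (i : Fin 3) : Set.InjOn f (Q i) := fun a hai b hbi hab ↦ by
    rw [hf i ⟨a, hai⟩, hf i ⟨b, hbi⟩] at hab
    exact congrArg Subtype.val (hφ.injective i (mem_univ i) hab)
  refine ⟨f, fun i w hw ↦ ?_, hinj, fun a b hab ↦ ?_⟩
  · exact hf i ⟨w, hw⟩ ▸ hφ.mem i (mem_univ i) ⟨w, hw⟩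
  obtain ⟨i, hai⟩ := hcover a
  obtain ⟨j, hbj⟩ := hcover b
  rcases eq_or_ne i j with rfl | hij
  · exact (hinj i).ne hai hbj hab.ne
  · rw [hf i ⟨a, hai⟩, hf j ⟨b, hbj⟩]
    exact hφ.ne_of_adj i (mem_univ i) j (mem_univ j) hij _ _ hab

theorem stmt_18
    {V : Type*} [Fintype V] [DecidableEq V] (G : SimpleGraph V)
    {α : Type*} [DecidableEq α]
    (Q : Fin 3 → Finset V)
    (hcover : ∀ w : V, ∃ i, w ∈ Q i)
    (hdisj : ∀ i j, i ≠ j → Disjoint (Q i) (Q j))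
    (hclique : ∀ i, G.IsClique (Q i : Set V))
    (ha : ∀ i j, i ≠ j → ∀ x ∈ Q i, ∀ b ∈ Q j, ∀ c ∈ Q j,
      G.Adj x b → G.Adj x c → b = c)
    (hb : ∀ i j k, i ≠ j → j ≠ k → i ≠ k →
      ∀ a ∈ Q i, ∀ b ∈ Q j, ∀ c ∈ Q k, G.Adj a b → G.Adj a c → G.Adj b c)
    (L : Fin 3 → Finset α)
    (hsize : ∀ i, (Q i).card ≤ (L i).card)
    (d : Fin 3 → α) (hd : ∀ i, d i ∈ L i) (hdinj : Function.Injective d)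
    (hnocommon : ¬ ∃ c : α, ∀ i, c ∈ L i) :
    ∃ f : V → α, (∀ i, ∀ w ∈ Q i, f w ∈ L i) ∧ ∀ a b : V, G.Adj a b → f a ≠ f b := by
  obtain ⟨f, hmem, -, hne⟩ := stmt_18_general G Q hcover hdisj ha hb L hsize d hd hdinj hnocommon
  exact ⟨f, hmem, hne⟩
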